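/- Let Q be a privacy protocol all of whose entries are positive, let n ≥ 1, and let μ be a Borel probability measure on the simplex 𝒫 having a density f, such that the conditional differential entropy h_n(P|Y⃗) is finite. Then MSE^distr_{μ,n}(Q,Π_opt,n) ≥ (a/(2πe)) · e^{(2/(a−1))·h_n(P|Y⃗)}. -/

import Mathlib

/-!
Gibbs' variational principle bounds the differential entropy of a density `g` by
`log ∫ exp u - ∫ g * u` for any `u`. Apply it to each posterior density with
`u = -‖p - e‖² / (2 s)`, where `e` is the estimate for the outcome and the scale `s` is the *same*
for all outcomes. Projecting `e` to the hyperplane `∑ x, p x = 1` only increases `∫ exp u`, and then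
`‖p - e‖²` is, in the coordinates of `emb`, the quadratic form of `I + J` with `J` the all-ones
matrix. Since `det (I + J) = a`, the Gaussian integral gives, after averaging over the outcomes,
`h ≤ (a - 1) / 2 * log (2 π s) - log a / 2 + MSE / (2 s)` for every `s > 0`.
Choosing `s = (a ^ (1 / (a - 1)) / (2 π e)) * exp (2 h / (a - 1))` yields the sharper constant
`(a - 1) * a ^ (1 / (a - 1)) / (2 π e)`, and Bernoulli's inequality shows
`(a - 1) * a ^ (1 / (a - 1)) ≥ a`. Any estimator may take the place of the posterior mean.
-/

open MeasureTheory Matrix Finset Filter Real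

noncomputable section

/-- The probability simplex in `ℝ^a`. -/
def simplex (a : ℕ) : Set (Fin a → ℝ) :=
  {p | (∀ x, 0 ≤ p x) ∧ ∑ x, p x = 1}

/-- Likelihood `L_y(p) = ∏ i, (Qp)_{y i}`. -/
def lik {a b n : ℕ} (Q : Matrix (Fin b) (Fin a) ℝ) (y : Fin n → Fin b)
    (p : Fin a → ℝ) : ℝ :=
  ∏ i, Q.mulVec p (y i)

/-- Mean squared error for distribution estimation. -/
def MSEdistr {a b n : ℕ} (Q : Matrix (Fin b) (Fin a) ℝ) (μ : Measure (Fin a → ℝ))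
    (Est : (Fin n → Fin b) → (Fin a → ℝ)) : ℝ :=
  ∑ y : (Fin n → Fin b), ∫ p, (∑ x, (p x - Est y x) ^ 2) * lik Q y p ∂μ

/-- The posterior-mean estimator for distribution estimation. -/
def PiOpt {a b n : ℕ} (Q : Matrix (Fin b) (Fin a) ℝ) (μ : Measure (Fin a → ℝ))
    (y : Fin n → Fin b) : Fin a → ℝ :=
  fun x => (∫ p, p x * lik Q y p ∂μ) / (∫ p, lik Q y p ∂μ)

/-- Empirical frequency vector of a data vector. -/
def freqVec {a n : ℕ} (xv : Fin n → Fin a) : Fin a → ℝ :=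
  fun α => ((Finset.univ.filter fun i => xv i = α).card : ℝ) / n

/-- Joint weight `w(x⃗,y⃗) = ∫ ∏ i, p_{x_i} Q_{y_i|x_i} dμ(p)`. -/
def wgt {a b n : ℕ} (Q : Matrix (Fin b) (Fin a) ℝ) (μ : Measure (Fin a → ℝ))
    (xv : Fin n → Fin a) (y : Fin n → Fin b) : ℝ :=
  ∫ p, (∏ i, p (xv i) * Q (y i) (xv i)) ∂μ

/-- Mean squared error for frequency estimation. -/
def MSEfreq {a b n : ℕ} (Q : Matrix (Fin b) (Fin a) ℝ) (μ : Measure (Fin a → ℝ))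
    (Est : (Fin n → Fin b) → (Fin a → ℝ)) : ℝ :=
  ∑ xv : (Fin n → Fin a), ∑ y : (Fin n → Fin b),
    wgt Q μ xv y * ∑ α, (freqVec xv α - Est y α) ^ 2

/-- The posterior-mean estimator for frequency estimation. -/
def PhiOpt {a b n : ℕ} (Q : Matrix (Fin b) (Fin a) ℝ) (μ : Measure (Fin a → ℝ))
    (y : Fin n → Fin b) : Fin a → ℝ :=
  fun α => (∑ xv : (Fin n → Fin a), wgt Q μ xv y * freqVec xv α) /
    (∑ xv : (Fin n → Fin a), wgt Q μ xv y)

/-- `P(φ, y⃗) = ∑_{x⃗ : F(x⃗) = φ} w(x⃗, y⃗)`. -/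
def Pphi {a b n : ℕ} (Q : Matrix (Fin b) (Fin a) ℝ) (μ : Measure (Fin a → ℝ))
    (φ : Fin a → ℝ) (y : Fin n → Fin b) : ℝ := by
  classical
  exact ∑ xv ∈ Finset.univ.filter (fun xv : Fin n → Fin a => freqVec xv = φ), wgt Q μ xv y

/-- Conditional Shannon entropy `H_n(F | Y⃗)` (terms with zero probability vanish since
`Real.log 0 = 0`). -/
def HFcond {a b : ℕ} (Q : Matrix (Fin b) (Fin a) ℝ) (μ : Measure (Fin a → ℝ))
    (n : ℕ) : ℝ := by
  classical
  exact -(∑ y : (Fin n → Fin b), ∑ φ ∈ Finset.image (freqVec (a := a) (n := n)) Finset.univ,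
      Pphi Q μ φ y * Real.log (Pphi Q μ φ y /
        ∑ φ' ∈ Finset.image (freqVec (a := a) (n := n)) Finset.univ, Pphi Q μ φ' y))

/-- The set `Δ = {q ∈ ℝ^m : q ≥ 0, ∑ q ≤ 1}`. -/
def stdCorner (m : ℕ) : Set (Fin m → ℝ) :=
  {q | (∀ i, 0 ≤ q i) ∧ ∑ i, q i ≤ 1}

/-- The identification `Δ ⊂ ℝ^{a-1} → 𝒫 ⊂ ℝ^a`,
`q ↦ (q_1, …, q_{a-1}, 1 - ∑ q_i)`. -/
def emb (a : ℕ) (q : Fin (a - 1) → ℝ) : Fin a → ℝ :=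
  fun x => if h : (x : ℕ) < a - 1 then q ⟨x.1, h⟩ else 1 - ∑ i, q i

/-- `μ` has density `f` (w.r.t. Lebesgue measure on `Δ`). -/
def IsDensity {a : ℕ} (μ : Measure (Fin a → ℝ)) (f : (Fin (a - 1) → ℝ) → ℝ) : Prop :=
  Measurable f ∧ (∀ q, 0 ≤ f q) ∧ (∫ q in stdCorner (a - 1), f q) = 1 ∧
  ∀ g : (Fin a → ℝ) → ℝ, Measurable g → (∃ C, ∀ p, |g p| ≤ C) →
    (∫ p, g p ∂μ) = ∫ q in stdCorner (a - 1), g (emb a q) * f q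

/-- `μ` has continuous density `f`. -/
def IsContDensity {a : ℕ} (μ : Measure (Fin a → ℝ)) (f : (Fin (a - 1) → ℝ) → ℝ) : Prop :=
  ContinuousOn f (stdCorner (a - 1)) ∧ (∀ q, 0 ≤ f q) ∧
  (∫ q in stdCorner (a - 1), f q) = 1 ∧
  ∀ g : (Fin a → ℝ) → ℝ, Measurable g → (∃ C, ∀ p, |g p| ≤ C) →
    (∫ p, g p ∂μ) = ∫ q in stdCorner (a - 1), g (emb a q) * f q

/-- Normalisation constant `C_{y⃗} = ∫_Δ f(q) L_{y⃗}(p(q)) dλ(q)`. -/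
def Cw {a b n : ℕ} (Q : Matrix (Fin b) (Fin a) ℝ) (f : (Fin (a - 1) → ℝ) → ℝ)
    (y : Fin n → Fin b) : ℝ :=
  ∫ q in stdCorner (a - 1), f q * lik Q y (emb a q)

/-- Posterior density `g_{y⃗}(q) = f(q) L_{y⃗}(p(q)) / C_{y⃗}`. -/
def gpost {a b n : ℕ} (Q : Matrix (Fin b) (Fin a) ℝ) (f : (Fin (a - 1) → ℝ) → ℝ)
    (y : Fin n → Fin b) (q : Fin (a - 1) → ℝ) : ℝ :=
  f q * lik Q y (emb a q) / Cw Q f y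

/-- Conditional differential entropy `h_n(P | Y⃗)`. -/
def hCond {a b : ℕ} (Q : Matrix (Fin b) (Fin a) ℝ) (f : (Fin (a - 1) → ℝ) → ℝ)
    (n : ℕ) : ℝ :=
  ∑ y : (Fin n → Fin b),
    Cw Q f y * (-(∫ q in stdCorner (a - 1), gpost Q f y q * Real.log (gpost Q f y q)))

/-- The matrix `D_p = Qᵀ · diag(Qp)⁻¹ · Q`. -/
def Dmat {a b : ℕ} (Q : Matrix (Fin b) (Fin a) ℝ) (p : Fin a → ℝ) :
    Matrix (Fin a) (Fin a) ℝ :=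
  Qᵀ * Matrix.diagonal (fun y => (Q.mulVec p y)⁻¹) * Q

/-- The constant `γ_μ(Q)`. -/
def gammaMu {a b : ℕ} (Q : Matrix (Fin b) (Fin a) ℝ) (μ : Measure (Fin a → ℝ)) : ℝ :=
  (((a : ℝ) - 1) / 2) * Real.log (2 * π * Real.exp 1) -
    (1 / 2) * ∫ p, Real.log (Dmat Q p).det ∂μ

/-- The truncated column `w_x = (Q_{1|x}, …, Q_{b-1|x})`. -/
def wcol {a b : ℕ} (Q : Matrix (Fin b) (Fin a) ℝ) (x : Fin a) : Fin (b - 1) → ℝ :=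
  fun y => Q ⟨y.1, lt_of_lt_of_le y.2 (Nat.sub_le b 1)⟩ x

/-- The matrix `E_x = diag(w_x) - w_x w_xᵀ`. -/
def Emat {a b : ℕ} (Q : Matrix (Fin b) (Fin a) ℝ) (x : Fin a) :
    Matrix (Fin (b - 1)) (Fin (b - 1)) ℝ :=
  Matrix.diagonal (wcol Q x) - Matrix.vecMulVec (wcol Q x) (wcol Q x)

/-- The matrix `G_p = ∑ x, p_x E_x`. -/
def Gmat {a b : ℕ} (Q : Matrix (Fin b) (Fin a) ℝ) (p : Fin a → ℝ) :
    Matrix (Fin (b - 1)) (Fin (b - 1)) ℝ :=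
  ∑ x, p x • Emat Q x

/-- The constant `δ_μ(Q)`. -/
def deltaMu {a b : ℕ} (Q : Matrix (Fin b) (Fin a) ℝ) (μ : Measure (Fin a → ℝ)) : ℝ :=
  gammaMu Q μ +
    (1 / 2) * ∫ p, (Real.log (Gmat Q p).det - ∑ y, Real.log (Q.mulVec p y)) ∂μ

/-- `Q` satisfies `ε`-local differential privacy. -/
def SatisfiesLDP {a b : ℕ} (Q : Matrix (Fin b) (Fin a) ℝ) (ε : ℝ) : Prop :=
  ∀ x x' : Fin a, ∀ y : Fin b, Q y x' ≤ Real.exp ε * Q y x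

lemma mul_add_sub_exp_le_mul_log {x : ℝ} (hx : 0 ≤ x) (u : ℝ) :
    x * u + x - exp u ≤ x * log x := by
  rcases hx.eq_or_lt with rfl | hx
  · simp [exp_nonneg]
  · have h : x * (u - log x + 1) ≤ exp u := by
      calc x * (u - log x + 1) ≤ x * exp (u - log x) := by gcongr; exact add_one_le_exp _
        _ = exp u := by rw [exp_sub, exp_log hx]; field_simp
    linarith

/-- The differential entropy `-∫ g log g dν` of a density `g` with respect to `ν`. When `g log g`
is not integrable the Bochner integral makes it `0`. -/
def diffEntropy {α : Type*} [MeasurableSpace α] (ν : Measure α) (g : α → ℝ) : ℝ :=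
  -∫ x, g x * log (g x) ∂ν

lemma diffEntropy_le_log_integral_exp_sub {α : Type*} [MeasurableSpace α] {ν : Measure α}
    {g u : α → ℝ} (hg : 0 ≤ᵐ[ν] g) (hg_one : ∫ x, g x ∂ν = 1)
    (hg_log : Integrable (fun x => g x * log (g x)) ν)
    (hgu : Integrable (fun x => g x * u x) ν) (hu : Integrable (fun x => exp (u x)) ν) :
    diffEntropy ν g ≤ log (∫ x, exp (u x) ∂ν) - ∫ x, g x * u x ∂ν := by
  have hg_int : Integrable g ν := .of_integral_ne_zero (by simp [hg_one])
  have : NeZero ν := ⟨by rintro rfl; simp at hg_one⟩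
  set Z := ∫ x, exp (u x) ∂ν
  have hZ : 0 < Z := integral_exp_pos hu
  have pointwise : ∀ᵐ x ∂ν,
      g x * u x + (1 - log Z) * g x - exp (u x) / Z ≤ g x * log (g x) := by
    filter_upwards [hg] with x hx
    have h := mul_add_sub_exp_le_mul_log hx (u x - log Z)
    rw [exp_sub, exp_log hZ] at h
    linarith
  have hlin : Integrable (fun x => (1 - log Z) * g x) ν := hg_int.const_mul _
  have integrated := integral_mono_ae ((hgu.add hlin).sub (hu.div_const Z)) hg_log pointwise
  rw [integral_sub' (hgu.add hlin) (hu.div_const Z), integral_add' hgu hlin, integral_const_mul,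
    integral_div, hg_one, div_self hZ.ne'] at integrated
  rw [diffEntropy]
  linarith

section GaussianIntegral

variable {ι : Type*} [Fintype ι]

lemma integral_exp_neg_mul_dotProduct_self (b : ℝ) :
    ∫ v : ι → ℝ, exp (-b * (v ⬝ᵥ v)) = √(π / b) ^ Fintype.card ι := by
  simp only [dotProduct, ← sq, Finset.mul_sum, exp_sum]
  rw [integral_fintype_prod_volume_eq_pow (fun x : ℝ => exp (-b * x ^ 2)), integral_gaussian]

variable [DecidableEq ι]

lemma integral_comp_mulVec {E : Type*} [NormedAddCommGroup E] [NormedSpace ℝ E]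
    {A : Matrix ι ι ℝ} (hA : A.det ≠ 0) (F : (ι → ℝ) → E) :
    ∫ q, F (A *ᵥ q) = |A.det|⁻¹ • ∫ v, F v := by
  have hemb : MeasurableEmbedding (toLin' A) :=
    (toLin' A).continuous_of_finiteDimensional.measurableEmbedding
      (mulVec_injective_of_isUnit ((isUnit_iff_isUnit_det A).2 hA.isUnit))
  calc ∫ q, F (A *ᵥ q) = ∫ v, F v ∂(volume.map (toLin' A)) := (hemb.integral_map F).symm
    _ = |A.det|⁻¹ • ∫ v, F v := by
      rw [map_matrix_volume_pi_eq_smul_volume_pi hA, integral_smul_measure,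
        ENNReal.toReal_ofReal (abs_nonneg _), abs_inv]

open scoped MatrixOrder Matrix.Norms.L2Operator in
lemma integral_exp_neg_mul_dotProduct_mulVec {S : Matrix ι ι ℝ} (hS : S.PosDef) (b : ℝ) :
    ∫ q : ι → ℝ, exp (-b * (q ⬝ᵥ S *ᵥ q)) = √(π / b) ^ Fintype.card ι / √S.det := by
  obtain ⟨A, rfl⟩ := CStarAlgebra.nonneg_iff_eq_star_mul_self.mp hS.posSemidef.nonneg
  have hdet : (star A * A).det = A.det ^ 2 := by
    rw [star_eq_conjTranspose, conjTranspose_eq_transpose_of_trivial, det_mul, det_transpose, sq]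
  have hA : A.det ≠ 0 := fun h => hS.det_pos.ne' (by rw [hdet, h, sq, zero_mul])
  have hquad (q : ι → ℝ) : q ⬝ᵥ (star A * A) *ᵥ q = (A *ᵥ q) ⬝ᵥ (A *ᵥ q) := by
    rw [star_eq_conjTranspose, conjTranspose_eq_transpose_of_trivial, ← mulVec_mulVec,
      dotProduct_mulVec, vecMul_transpose]
  simp only [hquad]
  rw [integral_comp_mulVec hA fun v => exp (-b * (v ⬝ᵥ v)), integral_exp_neg_mul_dotProduct_self,
    hdet, sqrt_sq_eq_abs, smul_eq_mul, inv_mul_eq_div]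

end GaussianIntegral

lemma add_one_le_mul_rpow_inv {x : ℝ} (hx : 1 ≤ x) : x + 1 ≤ x * (x + 1) ^ x⁻¹ := by
  have hx0 : 0 < x := by linarith
  -- Bernoulli's inequality at `1 / (x + 1) = 1 - x / (x + 1)`
  have h := rpow_one_add_le_one_add_mul_self (s := -(x / (x + 1))) (p := x⁻¹)
    (neg_le_neg (div_le_one_of_le₀ (by linarith) (by linarith))) (by positivity)
    (inv_le_one_of_one_le₀ hx)
  have hbase : 1 + -(x / (x + 1)) = (x + 1)⁻¹ := by field_simp; ring
  have hbound : 1 + x⁻¹ * -(x / (x + 1)) = x / (x + 1) := by field_simp; ring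
  rw [hbase, hbound, inv_rpow (by linarith), inv_le_comm₀ (by positivity) (by positivity), inv_div,
    div_le_iff₀ hx0] at h
  linarith

lemma mul_exp_le_of_forall_le_log_add_div {k h M : ℝ} (hk : 0 < k)
    (H : ∀ s, 0 < s → h ≤ k / 2 * log (2 * π * s) + M / (2 * s)) :
    k / (2 * π * exp 1) * exp (2 / k * h) ≤ M := by
  -- for a given `M` the right-hand side of `H` is minimal at `s = M / k`, which is this `s` when
  -- equality holds in the conclusion
  set s := exp (2 / k * h) / (2 * π * exp 1) with hs_def
  have hs : 0 < s := by positivity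
  have hlog : log (2 * π * s) = 2 / k * h - 1 := by
    rw [← log_exp (2 / k * h - 1), exp_sub, hs_def]
    congr 1
    field_simp
  have hM : k / 2 ≤ M / (2 * s) := by
    have hHs := H s hs
    have hcancel : k / 2 * (2 / k * h - 1) = h - k / 2 := by field_simp
    rw [hlog] at hHs
    linarith
  calc k / (2 * π * exp 1) * exp (2 / k * h) = k / 2 * (2 * s) := by rw [hs_def]; field_simp
    _ ≤ M := (le_div_iff₀ (by positivity)).1 hM

section Corner

lemma isCompact_stdCorner (m : ℕ) : IsCompact (stdCorner m) := by
  have hclosed : IsClosed (stdCorner m) := by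
    simp only [stdCorner, Set.ofPred_and, Set.ofPred_forall]
    exact (isClosed_iInter fun i => isClosed_le (by fun_prop) (by fun_prop)).inter
      (isClosed_le (by fun_prop) (by fun_prop))
  refine (isCompact_Icc (a := 0) (b := 1)).of_isClosed_subset hclosed
    fun q hq => ⟨hq.1, fun i => ?_⟩
  exact (single_le_sum (fun j _ => hq.1 j) (mem_univ i)).trans hq.2

lemma measurableSet_stdCorner (m : ℕ) : MeasurableSet (stdCorner m) :=
  (isCompact_stdCorner m).measurableSet

lemma continuous_emb (a : ℕ) : Continuous (emb a) := by
  refine continuous_pi fun x => ?_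
  unfold emb
  split_ifs <;> fun_prop

variable {a : ℕ} [NeZero a]

lemma sum_emb (q : Fin (a - 1) → ℝ) : ∑ x, emb a q x = 1 := by
  obtain ⟨m, rfl⟩ := Nat.exists_eq_succ_of_ne_zero (NeZero.ne a)
  simp [Fin.sum_univ_castSucc, emb]

lemma emb_mem_simplex {q : Fin (a - 1) → ℝ} (hq : q ∈ stdCorner (a - 1)) :
    emb a q ∈ simplex a := by
  refine ⟨fun x => ?_, sum_emb q⟩
  unfold emb
  split_ifs
  · exact hq.1 _
  · exact sub_nonneg.2 hq.2

lemma exists_emb_eq {p : Fin a → ℝ} (hp : ∑ x, p x = 1) : ∃ q, emb a q = p := by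
  obtain ⟨m, rfl⟩ := Nat.exists_eq_succ_of_ne_zero (NeZero.ne a)
  refine ⟨fun i : Fin m => p i.castSucc, funext fun x => ?_⟩
  rw [Fin.sum_univ_castSucc] at hp
  refine Fin.lastCases ?_ (fun i => ?_) x
  · simp [emb, ← hp]
  · simp [emb]

/-- The matrix `I + J`, with `J` the all-ones matrix: the Gram matrix of the Euclidean inner
product on the hyperplane `∑ x, p x = 1` in the coordinates given by `emb`. -/
def embGram (m : ℕ) : Matrix (Fin m) (Fin m) ℝ :=
  1 + vecMulVec 1 1

lemma posDef_embGram (m : ℕ) : (embGram m).PosDef :=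
  PosDef.one.add_posSemidef (by simpa using posSemidef_vecMulVec_self_star (1 : Fin m → ℝ))

lemma det_embGram (m : ℕ) : (embGram m).det = m + 1 := by
  rw [embGram, vecMulVec_eq Unit, det_one_add_replicateCol_mul_replicateRow]
  simp [add_comm]

lemma embGram_mulVec {m : ℕ} (d : Fin m → ℝ) (i : Fin m) :
    (embGram m *ᵥ d) i = d i + ∑ j, d j := by
  rw [embGram, add_mulVec, one_mulVec, Pi.add_apply]
  simp [mulVec, dotProduct, vecMulVec_apply]

lemma sum_emb_sub_emb_sq (q c : Fin (a - 1) → ℝ) :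
    ∑ x, (emb a q x - emb a c x) ^ 2 = (q - c) ⬝ᵥ embGram (a - 1) *ᵥ (q - c) := by
  obtain ⟨m, rfl⟩ := Nat.exists_eq_succ_of_ne_zero (NeZero.ne a)
  simp only [dotProduct, embGram_mulVec, Pi.sub_apply, mul_add, ← sum_mul, sum_add_distrib,
    sum_sub_distrib, ← sq]
  simp [Fin.sum_univ_castSucc, emb, sub_sq_comm]

/-- `emb a c` is the orthogonal projection of `e` to the hyperplane `∑ x, p x = 1`. -/
lemma exists_emb_sum_sq_le (e : Fin a → ℝ) :
    ∃ c, ∀ q, ∑ x, (emb a q x - emb a c x) ^ 2 ≤ ∑ x, (emb a q x - e x) ^ 2 := by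
  set δ := (∑ x, e x - 1) / a with hδ
  have ha : (a : ℝ) ≠ 0 := NeZero.ne _
  have hproj : ∑ x, (e x - δ) = 1 := by
    rw [sum_sub_distrib, sum_const, card_univ, Fintype.card_fin, nsmul_eq_mul, hδ]
    field_simp
    ring
  obtain ⟨c, hc⟩ := exists_emb_eq hproj
  refine ⟨c, fun q => ?_⟩
  have horth : ∑ x, (emb a q x - emb a c x) = 0 := by
    rw [sum_sub_distrib, sum_emb, sum_emb, sub_self]
  calc ∑ x, (emb a q x - emb a c x) ^ 2
      ≤ ∑ x, (emb a q x - emb a c x) ^ 2 + a * δ ^ 2 := le_add_of_nonneg_right (by positivity)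
    _ = ∑ x, ((emb a q x - emb a c x) ^ 2 - 2 * δ * (emb a q x - emb a c x) + δ ^ 2) := by
      simp [sum_add_distrib, sum_sub_distrib, ← mul_sum, horth]
    _ = ∑ x, (emb a q x - e x) ^ 2 := by
      refine sum_congr rfl fun x _ => ?_
      rw [congrFun hc x]
      ring

lemma integral_exp_neg_mul_sum_emb_sub_emb_sq (b : ℝ) (c : Fin (a - 1) → ℝ) :
    ∫ q, exp (-b * ∑ x, (emb a q x - emb a c x) ^ 2) = √(π / b) ^ (a - 1) / √a := by
  have hdet : (embGram (a - 1)).det = a := by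
    rw [det_embGram, Nat.cast_pred (NeZero.pos a), sub_add_cancel]
  simp only [sum_emb_sub_emb_sq]
  rw [integral_sub_right_eq_self (fun q => exp (-b * (q ⬝ᵥ embGram (a - 1) *ᵥ q))) c,
    integral_exp_neg_mul_dotProduct_mulVec (posDef_embGram _), hdet, Fintype.card_fin]

lemma integrable_exp_neg_mul_sum_emb_sub_emb_sq {b : ℝ} (hb : 0 < b) (c : Fin (a - 1) → ℝ) :
    Integrable fun q => exp (-b * ∑ x, (emb a q x - emb a c x) ^ 2) := by
  refine .of_integral_ne_zero ?_
  have ha : (0 : ℝ) < a := mod_cast NeZero.pos a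
  rw [integral_exp_neg_mul_sum_emb_sub_emb_sq]
  positivity

lemma integrable_exp_neg_mul_sum_emb_sub_sq {b : ℝ} (hb : 0 < b) (e : Fin a → ℝ) :
    Integrable fun q => exp (-b * ∑ x, (emb a q x - e x) ^ 2) := by
  obtain ⟨c, hc⟩ := exists_emb_sum_sq_le e
  have hemb := continuous_emb a
  refine (integrable_exp_neg_mul_sum_emb_sub_emb_sq hb c).mono'
    (Continuous.aestronglyMeasurable (by fun_prop)) (.of_forall fun q => ?_)
  rw [norm_of_nonneg (exp_nonneg _), exp_le_exp]
  exact mul_le_mul_of_nonpos_left (hc q) (neg_nonpos.2 hb.le)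

lemma integral_exp_neg_mul_sum_emb_sub_sq_le {b : ℝ} (hb : 0 < b) (e : Fin a → ℝ) :
    ∫ q, exp (-b * ∑ x, (emb a q x - e x) ^ 2) ≤ √(π / b) ^ (a - 1) / √a := by
  obtain ⟨c, hc⟩ := exists_emb_sum_sq_le e
  rw [← integral_exp_neg_mul_sum_emb_sub_emb_sq b c]
  refine integral_mono (integrable_exp_neg_mul_sum_emb_sub_sq hb e)
    (integrable_exp_neg_mul_sum_emb_sub_emb_sq hb c) fun q => exp_le_exp.2 ?_
  exact mul_le_mul_of_nonpos_left (hc q) (neg_nonpos.2 hb.le)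

lemma log_sqrt_pow_div_sqrt {x y : ℝ} (hx : 0 < x) (hy : 0 < y) (k : ℕ) :
    log (√x ^ k / √y) = k / 2 * log x - log y / 2 := by
  rw [log_div (by positivity) (by positivity), log_pow, log_sqrt hx.le, log_sqrt hy.le]
  ring

lemma diffEntropy_le_of_sum_emb_sub_sq {S : Set (Fin (a - 1) → ℝ)} {g : (Fin (a - 1) → ℝ) → ℝ}
    (hg : 0 ≤ᵐ[volume.restrict S] g) (hg_one : ∫ q in S, g q = 1)
    (hg_log : IntegrableOn (fun q => g q * log (g q)) S) (e : Fin a → ℝ)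
    (hg_sq : IntegrableOn (fun q => g q * ∑ x, (emb a q x - e x) ^ 2) S) {s : ℝ} (hs : 0 < s) :
    diffEntropy (volume.restrict S) g ≤ ((a : ℝ) - 1) / 2 * log (2 * π * s) - log a / 2 +
      (∫ q in S, g q * ∑ x, (emb a q x - e x) ^ 2) / (2 * s) := by
  have ha : (0 : ℝ) < a := mod_cast NeZero.pos a
  set b := 1 / (2 * s) with hb_def
  have hb : 0 < b := by positivity
  have hcross (q) : g q * (-b * ∑ x, (emb a q x - e x) ^ 2)
      = -b * (g q * ∑ x, (emb a q x - e x) ^ 2) := by ring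
  have hexp := integrable_exp_neg_mul_sum_emb_sub_sq hb e
  have gibbs := diffEntropy_le_log_integral_exp_sub hg hg_one hg_log
    (u := fun q => -b * ∑ x, (emb a q x - e x) ^ 2)
    (by simp only [hcross]; exact hg_sq.const_mul _) hexp.integrableOn
  simp only [hcross, integral_const_mul] at gibbs
  have : NeZero (volume.restrict S) := ⟨fun h => by simp [h] at hg_one⟩
  have partition : log (∫ q in S, exp (-b * ∑ x, (emb a q x - e x) ^ 2))
      ≤ ((a : ℝ) - 1) / 2 * log (2 * π * s) - log a / 2 := by
    calc log (∫ q in S, exp (-b * ∑ x, (emb a q x - e x) ^ 2))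
        ≤ log (√(π / b) ^ (a - 1) / √a) :=
          log_le_log (integral_exp_pos hexp.integrableOn)
            ((setIntegral_le_integral hexp (.of_forall fun _ => exp_nonneg _)).trans
              (integral_exp_neg_mul_sum_emb_sub_sq_le hb e))
      _ = ((a : ℝ) - 1) / 2 * log (2 * π * s) - log a / 2 := by
        rw [log_sqrt_pow_div_sqrt (by positivity) ha, Nat.cast_pred (NeZero.pos a), hb_def]
        congr 3
        field_simp
  have hcross_eq : b * (∫ q in S, g q * ∑ x, (emb a q x - e x) ^ 2)
      = (∫ q in S, g q * ∑ x, (emb a q x - e x) ^ 2) / (2 * s) := one_div_mul_eq_div _ _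
  linarith

end Corner

section Density

variable {a : ℕ} {μ : Measure (Fin a → ℝ)} {f : (Fin (a - 1) → ℝ) → ℝ}

lemma IsDensity.integrableOn (hf : IsDensity μ f) : IntegrableOn f (stdCorner (a - 1)) :=
  .of_integral_ne_zero (by rw [hf.2.2.1]; exact one_ne_zero)

lemma IsDensity.integrableOn_mul_comp_emb (hf : IsDensity μ f) {g : (Fin a → ℝ) → ℝ}
    (hg : Continuous g) : IntegrableOn (fun q => f q * g (emb a q)) (stdCorner (a - 1)) :=
  hf.integrableOn.mul_continuousOn (hg.comp (continuous_emb a)).continuousOn (isCompact_stdCorner _)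

/-- `IsDensity` only tests bounded functions; identifying the measure lets `IsDensity.integral_eq`
cover unbounded ones such as the squared error. -/
lemma IsDensity.eq_map_withDensity (hf : IsDensity μ f) :
    μ = ((volume.restrict (stdCorner (a - 1))).withDensity fun q => .ofReal (f q)).map (emb a) := by
  obtain ⟨-, hf_nonneg, hf_one, hf_int⟩ := id hf
  have : IsProbabilityMeasure μ := isProbabilityMeasure_iff_real.2 <| by
    simpa [hf_one] using hf_int (fun _ => 1) measurable_const ⟨1, by simp⟩
  have hemb := (continuous_emb a).measurable
  ext s hs
  have hμs : μ.real s = ∫ q in stdCorner (a - 1), (emb a ⁻¹' s).indicator f q := by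
    have h := hf_int (s.indicator 1) (measurable_one.indicator hs)
      ⟨1, fun p => by by_cases hp : p ∈ s <;> simp [hp]⟩
    rw [integral_indicator_one hs] at h
    rw [h]
    congr with q
    by_cases hq : emb a q ∈ s <;> simp [hq]
  rw [Measure.map_apply hemb hs, withDensity_apply _ (hemb hs),
    ← ofReal_integral_eq_lintegral_ofReal hf.integrableOn.integrable.restrict
      (.of_forall hf_nonneg),
    ← integral_indicator (hemb hs), ← hμs, ofReal_measureReal]

lemma IsDensity.integral_eq (hf : IsDensity μ f) {g : (Fin a → ℝ) → ℝ} (hg : Measurable g) :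
    ∫ p, g p ∂μ = ∫ q in stdCorner (a - 1), f q * g (emb a q) := by
  conv_lhs => rw [hf.eq_map_withDensity]
  rw [integral_map (continuous_emb a).aemeasurable hg.aestronglyMeasurable,
    integral_withDensity_eq_integral_toReal_smul hf.1.ennreal_ofReal
      (.of_forall fun _ => ENNReal.ofReal_lt_top)]
  simp only [ENNReal.toReal_ofReal (hf.2.1 _), smul_eq_mul]

end Density

section Posterior

variable {a b n : ℕ} {Q : Matrix (Fin b) (Fin a) ℝ} {f : (Fin (a - 1) → ℝ) → ℝ}

lemma continuous_lik (Q : Matrix (Fin b) (Fin a) ℝ) (y : Fin n → Fin b) :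
    Continuous (lik Q y) := by
  unfold lik mulVec dotProduct
  fun_prop

lemma lik_nonneg (hQ : ∀ y x, 0 ≤ Q y x) (y : Fin n → Fin b) {p : Fin a → ℝ}
    (hp : p ∈ simplex a) : 0 ≤ lik Q y p := by
  unfold lik mulVec dotProduct
  exact prod_nonneg fun _ _ => sum_nonneg fun x _ => mul_nonneg (hQ _ _) (hp.1 x)

lemma sum_lik (hQ : ∀ x, ∑ y, Q y x = 1) {p : Fin a → ℝ} (hp : p ∈ simplex a) :
    ∑ y : Fin n → Fin b, lik Q y p = 1 := by
  have hQp : ∑ y, (Q *ᵥ p) y = 1 := by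
    simp only [mulVec, dotProduct]
    rw [sum_comm]
    simpa only [← sum_mul, hQ, one_mul] using hp.2
  simp only [lik]
  rw [← Fintype.piFinset_univ, ← prod_univ_sum (fun _ => univ) fun _ y => (Q *ᵥ p) y]
  simp only [hQp, prod_const_one]

lemma integral_gpost {y : Fin n → Fin b} (hC : Cw Q f y ≠ 0) :
    ∫ q in stdCorner (a - 1), gpost Q f y q = 1 := by
  simp only [gpost, integral_div]
  exact div_self hC

lemma hCond_eq_sum_diffEntropy (Q : Matrix (Fin b) (Fin a) ℝ) (f : (Fin (a - 1) → ℝ) → ℝ) :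
    hCond Q f n =
      ∑ y : Fin n → Fin b,
        Cw Q f y * diffEntropy (volume.restrict (stdCorner (a - 1))) (gpost Q f y) :=
  rfl

lemma IsDensity.integral_mul_lik {μ : Measure (Fin a → ℝ)} (hf : IsDensity μ f)
    {y : Fin n → Fin b} (hC : Cw Q f y ≠ 0) {g : (Fin a → ℝ) → ℝ} (hg : Measurable g) :
    ∫ p, g p * lik Q y p ∂μ =
      Cw Q f y * ∫ q in stdCorner (a - 1), gpost Q f y q * g (emb a q) := by
  rw [hf.integral_eq (g := fun p => g p * lik Q y p) (hg.mul (continuous_lik Q y).measurable),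
    ← integral_const_mul]
  congr with q
  rw [gpost]
  field_simp

lemma IsDensity.integrableOn_gpost_mul {μ : Measure (Fin a → ℝ)} (hf : IsDensity μ f)
    (y : Fin n → Fin b) {g : (Fin a → ℝ) → ℝ} (hg : Continuous g) :
    IntegrableOn (fun q => gpost Q f y q * g (emb a q)) (stdCorner (a - 1)) := by
  have h := (hf.integrableOn_mul_comp_emb (g := fun p => lik Q y p * g p)
    ((continuous_lik Q y).mul hg)).div_const (Cw Q f y)
  refine h.congr (.of_forall fun q => ?_)
  simp only [gpost]
  ring

variable [NeZero a]

lemma mul_lik_emb_nonneg (hf : ∀ q, 0 ≤ f q) (hQ : ∀ y x, 0 ≤ Q y x) (y : Fin n → Fin b)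
    {q : Fin (a - 1) → ℝ} (hq : q ∈ stdCorner (a - 1)) : 0 ≤ f q * lik Q y (emb a q) :=
  mul_nonneg (hf q) (lik_nonneg hQ y (emb_mem_simplex hq))

lemma Cw_nonneg (hf : ∀ q, 0 ≤ f q) (hQ : ∀ y x, 0 ≤ Q y x) (y : Fin n → Fin b) :
    0 ≤ Cw Q f y :=
  setIntegral_nonneg (measurableSet_stdCorner _) fun _ => mul_lik_emb_nonneg hf hQ y

lemma gpost_nonneg (hf : ∀ q, 0 ≤ f q) (hQ : ∀ y x, 0 ≤ Q y x) (y : Fin n → Fin b)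
    {q : Fin (a - 1) → ℝ} (hq : q ∈ stdCorner (a - 1)) : 0 ≤ gpost Q f y q :=
  div_nonneg (mul_lik_emb_nonneg hf hQ y hq) (Cw_nonneg hf hQ y)

variable {μ : Measure (Fin a → ℝ)}

lemma IsDensity.sum_Cw (hf : IsDensity μ f) (hQ : ∀ x, ∑ y, Q y x = 1) :
    ∑ y : Fin n → Fin b, Cw Q f y = 1 := by
  simp only [Cw]
  rw [← integral_finsetSum _ fun y _ => hf.integrableOn_mul_comp_emb (continuous_lik Q y),
    ← hf.2.2.1]
  refine setIntegral_congr_fun (measurableSet_stdCorner _) fun q hq => ?_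
  simp only [← mul_sum, sum_lik hQ (emb_mem_simplex hq), mul_one]

lemma IsDensity.Cw_mul_diffEntropy_gpost_le (hf : IsDensity μ f) (hQ : ∀ y x, 0 ≤ Q y x)
    {y : Fin n → Fin b}
    (hlog : IntegrableOn (fun q => gpost Q f y q * log (gpost Q f y q)) (stdCorner (a - 1)))
    (e : Fin a → ℝ) {s : ℝ} (hs : 0 < s) :
    Cw Q f y * diffEntropy (volume.restrict (stdCorner (a - 1))) (gpost Q f y) ≤
      Cw Q f y * (((a : ℝ) - 1) / 2 * log (2 * π * s) - log a / 2) +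
        (∫ p, (∑ x, (p x - e x) ^ 2) * lik Q y p ∂μ) / (2 * s) := by
  have hC := Cw_nonneg hf.2.1 hQ y
  rcases hC.eq_or_lt with hC0 | hCpos
  · have herr : 0 ≤ ∫ p, (∑ x, (p x - e x) ^ 2) * lik Q y p ∂μ := by
      rw [hf.integral_eq (by have := continuous_lik Q y; fun_prop)]
      refine setIntegral_nonneg (measurableSet_stdCorner _) fun q hq => ?_
      exact mul_nonneg (hf.2.1 q) (mul_nonneg (sum_nonneg fun x _ => sq_nonneg _)
        (lik_nonneg hQ y (emb_mem_simplex hq)))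
    rw [← hC0, zero_mul, zero_mul, zero_add]
    positivity
  · have hmax := diffEntropy_le_of_sum_emb_sub_sq
      (ae_restrict_of_forall_mem (measurableSet_stdCorner _)
        fun q hq => gpost_nonneg hf.2.1 hQ y hq)
      (integral_gpost hCpos.ne') hlog e
      (hf.integrableOn_gpost_mul y (g := fun p => ∑ x, (p x - e x) ^ 2) (by fun_prop)) hs
    rw [hf.integral_mul_lik hCpos.ne' (by fun_prop), mul_div_assoc, ← mul_add]
    exact mul_le_mul_of_nonneg_left hmax hC

lemma IsDensity.hCond_le (hf : IsDensity μ f) (hQ : ∀ y x, 0 ≤ Q y x)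
    (hQcol : ∀ x, ∑ y, Q y x = 1)
    (hlog : ∀ y : Fin n → Fin b,
      IntegrableOn (fun q => gpost Q f y q * log (gpost Q f y q)) (stdCorner (a - 1)))
    (Est : (Fin n → Fin b) → Fin a → ℝ) {s : ℝ} (hs : 0 < s) :
    hCond Q f n ≤
      ((a : ℝ) - 1) / 2 * log (2 * π * s) - log a / 2 + MSEdistr Q μ Est / (2 * s) := by
  rw [hCond_eq_sum_diffEntropy]
  refine (sum_le_sum fun y _ =>
    hf.Cw_mul_diffEntropy_gpost_le hQ (hlog y) (Est y) hs).trans_eq ?_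
  rw [sum_add_distrib, ← sum_mul, hf.sum_Cw hQcol, one_mul, ← sum_div, MSEdistr]

end Posterior

theorem IsDensity.entropyPower_le_MSEdistr {a b n : ℕ} (ha : 2 ≤ a)
    {Q : Matrix (Fin b) (Fin a) ℝ} (hQ : ∀ y x, 0 ≤ Q y x) (hQcol : ∀ x, ∑ y, Q y x = 1)
    {μ : Measure (Fin a → ℝ)} {f : (Fin (a - 1) → ℝ) → ℝ} (hf : IsDensity μ f)
    (hfin : ∀ y : Fin n → Fin b,
      IntegrableOn (fun q => gpost Q f y q * log (gpost Q f y q)) (stdCorner (a - 1)))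
    (Est : (Fin n → Fin b) → Fin a → ℝ) :
    ((a : ℝ) - 1) * (a : ℝ) ^ ((a : ℝ) - 1)⁻¹ / (2 * π * exp 1) *
      exp (2 / ((a : ℝ) - 1) * hCond Q f n) ≤ MSEdistr Q μ Est := by
  have : NeZero a := ⟨by omega⟩
  have ha' : (2 : ℝ) ≤ a := mod_cast ha
  have hpow : (a : ℝ) ^ ((a : ℝ) - 1)⁻¹ = exp (2 / ((a : ℝ) - 1) * (log a / 2)) := by
    rw [rpow_def_of_pos (by linarith)]
    ring_nf
  have h := mul_exp_le_of_forall_le_log_add_div (h := hCond Q f n + log a / 2)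
    (M := MSEdistr Q μ Est) (sub_pos.2 (by linarith : (1 : ℝ) < a)) fun s hs => by
      linarith [hf.hCond_le hQ hQcol hfin Est hs]
  rw [mul_add, exp_add, ← hpow] at h
  convert h using 1
  ring

theorem MSEdistr_ge_entropy_bound_general {a b n : ℕ} (ha : 2 ≤ a)
    {Q : Matrix (Fin b) (Fin a) ℝ} (hQ : ∀ y x, 0 ≤ Q y x) (hQcol : ∀ x, ∑ y, Q y x = 1)
    {μ : Measure (Fin a → ℝ)} {f : (Fin (a - 1) → ℝ) → ℝ} (hf : IsDensity μ f)
    (hfin : ∀ y : Fin n → Fin b,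
      IntegrableOn (fun q => gpost Q f y q * log (gpost Q f y q)) (stdCorner (a - 1)))
    (Est : (Fin n → Fin b) → Fin a → ℝ) :
    (a : ℝ) / (2 * π * exp 1) * exp (2 / ((a : ℝ) - 1) * hCond Q f n) ≤ MSEdistr Q μ Est := by
  have ha' : (2 : ℝ) ≤ a := mod_cast ha
  refine le_trans ?_ (hf.entropyPower_le_MSEdistr ha hQ hQcol hfin Est)
  gcongr
  simpa using add_one_le_mul_rpow_inv (x := (a : ℝ) - 1) (by linarith)

/-- entropy lower bound on the optimal MSE for distribution
estimation. -/
theorem MSEdistr_ge_entropy_bound {a b : ℕ} (ha : 2 ≤ a) (hb : 2 ≤ b)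
    (Q : Matrix (Fin b) (Fin a) ℝ)
    (hQpos : ∀ y x, 0 < Q y x) (hQcol : ∀ x, ∑ y, Q y x = 1)
    (μ : Measure (Fin a → ℝ)) [IsProbabilityMeasure μ]
    (f : (Fin (a - 1) → ℝ) → ℝ) (hf : IsDensity μ f) {n : ℕ} (hn : 1 ≤ n)
    (hfin : ∀ y : (Fin n → Fin b),
      IntegrableOn (fun q => gpost Q f y q * Real.log (gpost Q f y q))
        (stdCorner (a - 1))) :
    (a : ℝ) / (2 * π * Real.exp 1) * Real.exp ((2 / ((a : ℝ) - 1)) * hCond Q f n) ≤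
      MSEdistr (n := n) Q μ (PiOpt Q μ) :=
  MSEdistr_ge_entropy_bound_general ha (fun y x => (hQpos y x).le) hQcol hf hfin (PiOpt Q μ)

end
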